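/- Let u0₁, u0₂ : [0,∞) → ℝ be nonnegative, right-continuous, of locally bounded variation, both satisfying u0ᵢ(t) ≥ α for all t ∈ [0,α) for some α > 0. Let ℓ₁, ℓ₂ be the corresponding solutions of the nonlocal free-boundary equation ℓᵢ(t) = u0ᵢ(t) + |{ s ∈ [0,t] : ℓᵢ(t−s) > s }|, and define vᵢ(τ,ξ) := u0ᵢ(ξ) + |{ s ∈ [0,τ] : ℓᵢ(s) + s > ξ }| for 0 ≤ τ ≤ ξ. If u0₁ ≤ u0₂ pointwise, then v₁(τ,ξ) ≤ v₂(τ,ξ) for all 0 ≤ τ ≤ ξ. -/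

import Mathlib

open MeasureTheory Set

/-!
Suppose the datum of a supersolution is nonnegative, and at least `α` on `[0, α)`. Then the front
stays at least `α` for all time: past a time `T` up to which this holds, the bound degrades at most
at unit speed, and this weaker bound, fed back into the nonlocal term, restores `α` on
`[T, T + α)`. Hence lags `s < α` always contribute to the nonlocal term of the larger front, while
lags `s ≥ α` only involve the fronts at times at most `t - α`: the comparison of the fronts
propagates in time steps of length `α`. The reconstructed solution is monotone in the datum and in
the front.
-/

theorem forall_nonneg_of_step {M : Type*} [AddCommMonoid M] [LinearOrder M]
    [IsOrderedCancelAddMonoid M] [Archimedean M] {P : M → Prop} {δ : M} (hδ : 0 < δ)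
    (step : ∀ T, 0 ≤ T → (∀ t ∈ Ico 0 T, P t) → ∀ t ∈ Ico T (T + δ), P t) :
    ∀ t, 0 ≤ t → P t := by
  have below_nsmul (n : ℕ) : ∀ t ∈ Ico 0 (n • δ), P t := by
    induction n with
    | zero => simp
    | succ n ih =>
      rintro t ⟨ht, htn⟩
      rw [succ_nsmul] at htn
      rcases lt_or_ge t (n • δ) with hlt | hge
      · exact ih t ⟨ht, hlt⟩
      · exact step _ (nsmul_nonneg hδ.le n) ih t ⟨hge, htn⟩
  intro t ht
  obtain ⟨n, hn⟩ := exists_lt_nsmul hδ t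
  exact below_nsmul n t ⟨ht, hn⟩

theorem measureReal_sep_mono {X : Type*} [MeasurableSpace X] {μ : Measure X} {S : Set X}
    {p q : X → Prop} (hS : μ S ≠ ⊤) (hpq : ∀ x ∈ S, p x → q x) :
    μ.real {x ∈ S | p x} ≤ μ.real {x ∈ S | q x} :=
  measureReal_mono (fun x hx ↦ ⟨hx.1, hpq x hx.1 hx.2⟩)
    (measure_ne_top_of_subset (sep_subset S q) hS)

theorem sub_le_volumeReal_of_Ioo_subset {S : Set ℝ} {a b : ℝ} (hS : volume S ≠ ⊤)
    (h : Ioo a b ⊆ S) : b - a ≤ volume.real S :=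
  calc
    b - a ≤ max (b - a) 0 := le_max_left _ _
    _ = volume.real (Ioo a b) := Real.volume_real_Ioo.symm
    _ ≤ volume.real S := measureReal_mono h hS

/-- Subsolutions `ℓ` of the nonlocal free-boundary equation with datum `u`. As in the equation, only
times `t ≥ 0` matter; the nonlocal set need not be measurable, its size is its outer measure. -/
def IsFreeBoundarySubsolution (u ℓ : ℝ → ℝ) : Prop :=
  ∀ t, 0 ≤ t → ℓ t ≤ u t + volume.real {s ∈ Icc 0 t | s < ℓ (t - s)}

/-- Supersolutions `ℓ` of the nonlocal free-boundary equation with datum `u`, with the conventions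
of `IsFreeBoundarySubsolution`. -/
def IsFreeBoundarySupersolution (u ℓ : ℝ → ℝ) : Prop :=
  ∀ t, 0 ≤ t → u t + volume.real {s ∈ Icc 0 t | s < ℓ (t - s)} ≤ ℓ t

/-- The solution `v(τ, ξ)` associated with a datum `u` and a front `ℓ`; the formula is used for all
real `τ` and `ξ`, not only on the octant `0 ≤ τ ≤ ξ`. -/
noncomputable def reconstructedSolution (u ℓ : ℝ → ℝ) (τ ξ : ℝ) : ℝ :=
  u ξ + volume.real {s ∈ Icc 0 τ | ξ < ℓ s + s}

theorem reconstructedSolution_mono {u₁ u₂ ℓ₁ ℓ₂ : ℝ → ℝ} {τ ξ : ℝ} (hu : u₁ ξ ≤ u₂ ξ)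
    (hℓ : ∀ s ∈ Icc 0 τ, ℓ₁ s ≤ ℓ₂ s) :
    reconstructedSolution u₁ ℓ₁ τ ξ ≤ reconstructedSolution u₂ ℓ₂ τ ξ :=
  add_le_add hu <| measureReal_sep_mono measure_Icc_lt_top.ne fun s hs hξ ↦
    hξ.trans_le (add_le_add_left (hℓ s hs) s)

namespace IsFreeBoundarySupersolution

variable {u ℓ : ℝ → ℝ} {α : ℝ}

theorem sub_le_front (hℓ : IsFreeBoundarySupersolution u ℓ) {t a b : ℝ} (ht : 0 ≤ t) (hu : 0 ≤ u t)
    (ha : 0 ≤ a) (hb : b ≤ t) (h : ∀ s ∈ Ioo a b, s < ℓ (t - s)) : b - a ≤ ℓ t := by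
  have hsub : Ioo a b ⊆ {s ∈ Icc 0 t | s < ℓ (t - s)} := fun s hs ↦
    ⟨⟨ha.trans hs.1.le, hs.2.le.trans hb⟩, h s hs⟩
  have hvol : b - a ≤ volume.real {s ∈ Icc 0 t | s < ℓ (t - s)} :=
    sub_le_volumeReal_of_Ioo_subset
      (measure_ne_top_of_subset (sep_subset _ _) measure_Icc_lt_top.ne) hsub
  linarith [hℓ t ht]

theorem datum_le_front (hℓ : IsFreeBoundarySupersolution u ℓ) {t : ℝ} (ht : 0 ≤ t) : u t ≤ ℓ t :=
  (le_add_of_nonneg_right measureReal_nonneg).trans (hℓ t ht)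

theorem sub_sub_le_front (hℓ : IsFreeBoundarySupersolution u ℓ) {T t : ℝ}
    (hT : ∀ r ∈ Ico 0 T, α ≤ ℓ r) (ht : 0 ≤ t) (hu : 0 ≤ u t) (hTt : T ≤ t) (hαt : α ≤ t) :
    α - (t - T) ≤ ℓ t :=
  hℓ.sub_le_front ht hu (sub_nonneg.2 hTt) hαt fun s hs ↦
    hs.2.trans_le (hT _ ⟨by linarith [hs.2], by linarith [hs.1]⟩)

theorem le_front (hℓ : IsFreeBoundarySupersolution u ℓ) (hα : 0 < α) (hu : ∀ t, 0 ≤ t → 0 ≤ u t)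
    (huα : ∀ t ∈ Ico 0 α, α ≤ u t) : ∀ t, 0 ≤ t → α ≤ ℓ t := by
  refine forall_nonneg_of_step hα fun T hT ih t ⟨hTt, htT⟩ ↦ ?_
  have ht : 0 ≤ t := hT.trans hTt
  rcases lt_or_ge t α with htα | hαt
  · exact (huα t ⟨ht, htα⟩).trans (hℓ.datum_le_front ht)
  suffices hlag : ∀ s ∈ Ioo 0 α, s < ℓ (t - s) by
    simpa only [sub_zero] using hℓ.sub_le_front ht (hu t ht) le_rfl hαt hlag
  rintro s ⟨-, hsα⟩
  have hr : 0 ≤ t - s := by linarith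
  rcases lt_or_ge (t - s) T with hrT | hTr
  · exact hsα.trans_le (ih _ ⟨hr, hrT⟩)
  rcases lt_or_ge (t - s) α with hrα | hαr
  · exact hsα.trans_le ((huα _ ⟨hr, hrα⟩).trans (hℓ.datum_le_front hr))
  · calc
      s < α - (t - s - T) := by linarith
      _ ≤ ℓ (t - s) := hℓ.sub_sub_le_front ih hr (hu _ hr) hTr hαr

end IsFreeBoundarySupersolution

theorem IsFreeBoundarySubsolution.le_supersolution {u₁ u₂ ℓ₁ ℓ₂ : ℝ → ℝ} {α : ℝ}
    (hℓ₁ : IsFreeBoundarySubsolution u₁ ℓ₁) (hℓ₂ : IsFreeBoundarySupersolution u₂ ℓ₂)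
    (hu : ∀ t, 0 ≤ t → u₁ t ≤ u₂ t) (hα : 0 < α) (hℓ₂α : ∀ t, 0 ≤ t → α ≤ ℓ₂ t) :
    ∀ t, 0 ≤ t → ℓ₁ t ≤ ℓ₂ t := by
  refine forall_nonneg_of_step hα fun T hT ih t ⟨hTt, htT⟩ ↦ ?_
  have ht : 0 ≤ t := hT.trans hTt
  have hlag : ∀ s ∈ Icc 0 t, s < ℓ₁ (t - s) → s < ℓ₂ (t - s) := by
    rintro s ⟨-, hst⟩ hs
    have hr : 0 ≤ t - s := sub_nonneg.2 hst
    rcases lt_or_ge (t - s) T with hrT | hTr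
    · exact hs.trans_le (ih _ ⟨hr, hrT⟩)
    · have hsα : s < α := by linarith
      exact hsα.trans_le (hℓ₂α _ hr)
  calc
    ℓ₁ t ≤ u₁ t + volume.real {s ∈ Icc 0 t | s < ℓ₁ (t - s)} := hℓ₁ t ht
    _ ≤ u₂ t + volume.real {s ∈ Icc 0 t | s < ℓ₂ (t - s)} :=
      add_le_add (hu t ht) (measureReal_sep_mono measure_Icc_lt_top.ne hlag)
    _ ≤ ℓ₂ t := hℓ₂ t ht

theorem mancala_solution_comparison_general {u₁ u₂ ℓ₁ ℓ₂ : ℝ → ℝ} {α : ℝ}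
    (hℓ₁ : IsFreeBoundarySubsolution u₁ ℓ₁) (hℓ₂ : IsFreeBoundarySupersolution u₂ ℓ₂)
    (hα : 0 < α) (hu₂ : ∀ t, 0 ≤ t → 0 ≤ u₂ t) (hu₂α : ∀ t ∈ Ico 0 α, α ≤ u₂ t)
    (hu : ∀ t, 0 ≤ t → u₁ t ≤ u₂ t) (τ : ℝ) {ξ : ℝ} (hξ : 0 ≤ ξ) :
    reconstructedSolution u₁ ℓ₁ τ ξ ≤ reconstructedSolution u₂ ℓ₂ τ ξ :=
  reconstructedSolution_mono (hu ξ hξ) fun s hs ↦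
    hℓ₁.le_supersolution hℓ₂ hu hα (hℓ₂.le_front hα hu₂ hu₂α) s hs.1

/-- Comparison principle for the reconstructed solutions:
`u0₁ ≤ u0₂` implies `v₁ ≤ v₂` on the octant `0 ≤ τ ≤ ξ`. -/
theorem mancala_solution_comparison
    (u01 u02 : ℝ → ℝ)
    (hu01_nonneg : ∀ t ≥ (0 : ℝ), 0 ≤ u01 t)
    (hu02_nonneg : ∀ t ≥ (0 : ℝ), 0 ≤ u02 t)
    (hu01_rc : ∀ t ≥ (0 : ℝ), ContinuousWithinAt u01 (Set.Ici t) t)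
    (hu02_rc : ∀ t ≥ (0 : ℝ), ContinuousWithinAt u02 (Set.Ici t) t)
    (hu01_bv : ∀ a > (0 : ℝ), BoundedVariationOn u01 (Set.Icc 0 a))
    (hu02_bv : ∀ a > (0 : ℝ), BoundedVariationOn u02 (Set.Icc 0 a))
    (α : ℝ) (hα : 0 < α)
    (hu01_pos : ∀ t ∈ Set.Ico (0 : ℝ) α, α ≤ u01 t)
    (hu02_pos : ∀ t ∈ Set.Ico (0 : ℝ) α, α ≤ u02 t)
    (ℓ₁ ℓ₂ : ℝ → ℝ)
    (hℓ₁ : ∀ t ≥ (0 : ℝ),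
      ℓ₁ t = u01 t + (volume {s : ℝ | s ∈ Set.Icc 0 t ∧ ℓ₁ (t - s) > s}).toReal)
    (hℓ₂ : ∀ t ≥ (0 : ℝ),
      ℓ₂ t = u02 t + (volume {s : ℝ | s ∈ Set.Icc 0 t ∧ ℓ₂ (t - s) > s}).toReal)
    (v₁ v₂ : ℝ → ℝ → ℝ)
    (hv₁ : ∀ τ ξ : ℝ, 0 ≤ τ → τ ≤ ξ →
      v₁ τ ξ = u01 ξ + (volume {s : ℝ | s ∈ Set.Icc 0 τ ∧ ℓ₁ s + s > ξ}).toReal)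
    (hv₂ : ∀ τ ξ : ℝ, 0 ≤ τ → τ ≤ ξ →
      v₂ τ ξ = u02 ξ + (volume {s : ℝ | s ∈ Set.Icc 0 τ ∧ ℓ₂ s + s > ξ}).toReal)
    (h_le : ∀ t ≥ (0 : ℝ), u01 t ≤ u02 t) :
    ∀ τ ξ : ℝ, 0 ≤ τ → τ ≤ ξ → v₁ τ ξ ≤ v₂ τ ξ := by
  intro τ ξ hτ hτξ
  rw [hv₁ τ ξ hτ hτξ, hv₂ τ ξ hτ hτξ]
  exact mancala_solution_comparison_general (fun t ht ↦ (hℓ₁ t ht).le) (fun t ht ↦ (hℓ₂ t ht).ge)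
    hα hu02_nonneg hu02_pos h_le τ (hτ.trans hτξ)
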